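/- arXiv:2509.20259 — 2 statements merged into one kernel-verified Lean document; each statement's English description precedes it below -/
import Mathlib

section
/- There exists an absolute constant C > 0 such that for every real number M ≥ 1, one has |Σ_{x,y} (x + y − M)/(x·y) − (2/ζ(2) − 1)·M| ≤ C·(1 + log M), where the sum is over pairs of coprime positive integers x, y with x ≤ M, y ≤ M and x + y > M. -/
open Finset in
theorem aux_step (f : ℕ → ℕ → ℝ) (hf : ∀ x y, f x y = f y x) (n : ℕ) (hn : 1 ≤ n) :
    (∑ x ∈ Icc 1 (n+1), ∑ y ∈ Icc 1 (n+1),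
      if n + 1 < x + y ∧ Nat.gcd x y = 1 then f x y else 0)
    = (∑ x ∈ Icc 1 n, ∑ y ∈ Icc 1 n, if n < x + y ∧ Nat.gcd x y = 1 then f x y else 0)
      + 2 * (∑ y ∈ Icc 1 n, if Nat.gcd y (n+1) = 1 then f y (n+1) else 0)
      - ∑ x ∈ Icc 1 n, if Nat.gcd x (n+1) = 1 then f x (n+1-x) else 0 := by
  have h1 : (∑ x ∈ Icc 1 n, ∑ y ∈ Icc 1 n, if n < x + y ∧ Nat.gcd x y = 1 then f x y else 0)
      = (∑ x ∈ Icc 1 n, ∑ y ∈ Icc 1 n, if n + 1 < x + y ∧ Nat.gcd x y = 1 then f x y else 0)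
        + ∑ x ∈ Icc 1 n, if Nat.gcd x (n+1) = 1 then f x (n+1-x) else 0 := by
    rw [← Finset.sum_add_distrib]
    refine Finset.sum_congr rfl fun x hx => ?_
    rw [Finset.mem_Icc] at hx
    have h2 : (if Nat.gcd x (n+1) = 1 then f x (n+1-x) else 0)
        = ∑ y ∈ Icc 1 n, if y = n + 1 - x then
          (if Nat.gcd x (n+1) = 1 then f x (n+1-x) else 0) else 0 := by
      rw [Finset.sum_ite_eq' (Icc 1 n) (n+1-x)
        (fun _ => if Nat.gcd x (n+1) = 1 then f x (n+1-x) else 0)]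
      have hm : n + 1 - x ∈ Icc 1 n := by rw [Finset.mem_Icc]; omega
      simp only [hm, if_true]
    rw [h2, ← Finset.sum_add_distrib]
    refine Finset.sum_congr rfl fun y hy => ?_
    rw [Finset.mem_Icc] at hy
    by_cases hxy : y = n + 1 - x
    · have e : n + 1 = x + y := by omega
      have e2 : n + 1 - x = y := by omega
      have hlt : n < x + y := by omega
      have hg : Nat.gcd x (n+1) = Nat.gcd x y := by rw [e]; simp
      have hnl : ¬ (n + 1 < x + y) := by omega
      simp [hlt, hnl, hg, e2]
    · have : n < x + y ↔ n + 1 < x + y := by omega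
      simp [hxy, this]
  have h3 : ∀ x ∈ Icc 1 n, (∑ y ∈ Icc 1 (n+1),
      if n + 1 < x + y ∧ Nat.gcd x y = 1 then f x y else 0)
      = (∑ y ∈ Icc 1 n, if n + 1 < x + y ∧ Nat.gcd x y = 1 then f x y else 0)
        + if Nat.gcd x (n+1) = 1 then f x (n+1) else 0 := by
    intro x hx
    rw [Finset.mem_Icc] at hx
    rw [Finset.sum_Icc_succ_top (by omega)]
    have : n + 1 < x + (n+1) := by omega
    simp [this]
  have h4 : (∑ y ∈ Icc 1 (n+1),
      if n + 1 < (n+1) + y ∧ Nat.gcd (n+1) y = 1 then f (n+1) y else 0)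
      = ∑ y ∈ Icc 1 n, if Nat.gcd y (n+1) = 1 then f y (n+1) else 0 := by
    rw [Finset.sum_Icc_succ_top (by omega)]
    have : ¬ (n = 0) := by omega
    simp only [Nat.gcd_self, Nat.add_eq_right, this, and_false, if_false, add_zero]
    refine Finset.sum_congr rfl fun y hy => ?_
    rw [Finset.mem_Icc] at hy
    have h5 : n + 1 < n + 1 + y := by omega
    simp only [h5, true_and, Nat.gcd_comm (n+1) y, hf (n+1) y]
  rw [Finset.sum_Icc_succ_top (by omega), Finset.sum_congr rfl h3, Finset.sum_add_distrib, h4, h1]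
  ring

open Finset in
theorem aux_refl (n : ℕ) :
    (∑ x ∈ Icc 1 n, if Nat.gcd x (n+1) = 1 then (1 : ℝ) / ((n + 1 - x : ℕ) : ℝ) else 0)
    = ∑ x ∈ Icc 1 n, if Nat.gcd x (n+1) = 1 then (1 : ℝ) / (x : ℝ) else 0 := by
  refine Finset.sum_nbij' (fun x => n + 1 - x) (fun x => n + 1 - x) ?_ ?_ ?_ ?_ ?_
  · intro x hx; rw [Finset.mem_Icc] at *; omega
  · intro x hx; rw [Finset.mem_Icc] at *; omega
  · intro x hx; rw [Finset.mem_Icc] at *; omega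
  · intro x hx; rw [Finset.mem_Icc] at *; omega
  · intro x hx
    rw [Finset.mem_Icc] at hx
    have : Nat.gcd (n + 1 - x) (n+1) = Nat.gcd x (n+1) := by
      obtain ⟨k, hk⟩ : ∃ k, n + 1 = x + k := ⟨n + 1 - x, by omega⟩
      rw [hk]; simp [Nat.gcd_comm]
    simp only [this]

open Finset in
theorem aux_G (n : ℕ) (hn : 1 ≤ n) :
    (∑ x ∈ Icc 1 n, ∑ y ∈ Icc 1 n,
      if n < x + y ∧ Nat.gcd x y = 1 then (1 : ℝ) / ((x : ℝ) * y) else 0) = 1 := by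
  induction n, hn using Nat.le_induction with
  | base => simp
  | succ n hn ih =>
    rw [aux_step (fun x y => (1 : ℝ) / ((x : ℝ) * y)) (fun x y => by rw [mul_comm]) n hn, ih]
    have key : (∑ x ∈ Icc 1 n, if Nat.gcd x (n+1) = 1 then
          (1 : ℝ) / ((x : ℝ) * ((n + 1 - x : ℕ) : ℝ)) else 0)
        = (∑ x ∈ Icc 1 n, if Nat.gcd x (n+1) = 1 then (1 : ℝ) / ((x : ℝ) * ((n+1 : ℕ) : ℝ)) else 0)
          + (∑ x ∈ Icc 1 n, if Nat.gcd x (n+1) = 1 then (1 : ℝ) / ((n + 1 - x : ℕ) : ℝ) else 0)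
            / ((n + 1 : ℕ) : ℝ) := by
      rw [Finset.sum_div, ← Finset.sum_add_distrib]
      refine Finset.sum_congr rfl fun x hx => ?_
      rw [Finset.mem_Icc] at hx
      split_ifs
      · have h1 : (x : ℝ) ≠ 0 := by norm_cast; omega
        obtain ⟨k, hk⟩ : ∃ k, n + 1 = x + k := ⟨n + 1 - x, by omega⟩
        have hk2 : n + 1 - x = k := by omega
        have h2 : (k : ℝ) ≠ 0 := by norm_cast; omega
        have h3 : (x : ℝ) + k ≠ 0 := by norm_cast; omega
        rw [hk2, hk]; push_cast; field_simp; ring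
      · simp
    rw [key, aux_refl, Finset.sum_div]
    have : ∀ x : ℕ, (if Nat.gcd x (n+1) = 1 then (1 : ℝ) / (x : ℝ) else 0) / ((n+1 : ℕ) : ℝ)
        = if Nat.gcd x (n+1) = 1 then (1 : ℝ) / ((x : ℝ) * ((n+1 : ℕ) : ℝ)) else 0 := by
      intro x; split_ifs
      · rw [div_div]
      · simp
    rw [Finset.sum_congr rfl (fun x _ => this x)]
    ring

open Finset in
theorem aux_H (n : ℕ) (hn : 1 ≤ n) :
    (∑ x ∈ Icc 1 n, ∑ y ∈ Icc 1 n,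
      if n < x + y ∧ Nat.gcd x y = 1 then ((x : ℝ) + y) / ((x : ℝ) * y) else 0)
    = 2 * ∑ k ∈ Icc 1 n, (Nat.totient k : ℝ) / k := by
  induction n, hn using Nat.le_induction with
  | base => norm_num
  | succ n hn ih =>
    rw [aux_step (fun x y => ((x : ℝ) + y) / ((x : ℝ) * y))
      (fun x y => by rw [mul_comm, add_comm]) n hn, ih]
    have key : (∑ x ∈ Icc 1 n, if Nat.gcd x (n+1) = 1 then
          ((x : ℝ) + ((n + 1 - x : ℕ) : ℝ)) / ((x : ℝ) * ((n + 1 - x : ℕ) : ℝ)) else 0)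
        = (∑ x ∈ Icc 1 n, if Nat.gcd x (n+1) = 1 then (1 : ℝ) / (x : ℝ) else 0)
          + (∑ x ∈ Icc 1 n, if Nat.gcd x (n+1) = 1 then (1 : ℝ) / ((n + 1 - x : ℕ) : ℝ) else 0) := by
      rw [← Finset.sum_add_distrib]
      refine Finset.sum_congr rfl fun x hx => ?_
      rw [Finset.mem_Icc] at hx
      split_ifs
      · have h1 : (x : ℝ) ≠ 0 := by norm_cast; omega
        obtain ⟨k, hk⟩ : ∃ k, n + 1 = x + k := ⟨n + 1 - x, by omega⟩
        have hk2 : n + 1 - x = k := by omega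
        have h2 : (k : ℝ) ≠ 0 := by norm_cast; omega
        rw [hk2]; field_simp; ring
      · simp
    have key2 : (∑ x ∈ Icc 1 n, if Nat.gcd x (n+1) = 1 then
          ((x : ℝ) + ((n + 1 : ℕ) : ℝ)) / ((x : ℝ) * ((n + 1 : ℕ) : ℝ)) else 0)
        = (∑ x ∈ Icc 1 n, if Nat.gcd x (n+1) = 1 then (1 : ℝ) / (x : ℝ) else 0)
          + (∑ x ∈ Icc 1 n, if Nat.gcd x (n+1) = 1 then (1 : ℝ) / ((n + 1 : ℕ) : ℝ) else 0) := by
      rw [← Finset.sum_add_distrib]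
      refine Finset.sum_congr rfl fun x hx => ?_
      rw [Finset.mem_Icc] at hx
      split_ifs
      · have h1 : (x : ℝ) ≠ 0 := by norm_cast; omega
        have h2 : ((n + 1 : ℕ) : ℝ) ≠ 0 := by norm_cast
        field_simp; ring
      · simp
    have key3 : (∑ x ∈ Icc 1 n, if Nat.gcd x (n+1) = 1 then (1 : ℝ) / ((n + 1 : ℕ) : ℝ) else 0)
        = (Nat.totient (n+1) : ℝ) / ((n+1 : ℕ) : ℝ) := by
      rw [← Finset.sum_filter, Finset.sum_const, nsmul_eq_mul, mul_one_div]
      congr 2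
      rw [Nat.totient_eq_card_coprime]
      congr 1
      ext x
      simp only [Finset.mem_filter, Finset.mem_Icc, Finset.mem_range, Nat.Coprime,
        Nat.gcd_comm (n+1) x]
      constructor
      · rintro ⟨h1, h2⟩; exact ⟨by omega, h2⟩
      · rintro ⟨h1, h2⟩
        refine ⟨⟨?_, by omega⟩, h2⟩
        rcases Nat.eq_zero_or_pos x with rfl | h
        · simp at h2; omega
        · exact h
    rw [key, key2, key3, aux_refl, Finset.sum_Icc_succ_top (by omega)]
    ring

open Finset ArithmeticFunction in
theorem aux_tot (n : ℕ) (hn : 0 < n) :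
    (Nat.totient n : ℝ) / n = ∑ d ∈ n.divisors, (moebius d : ℝ) / d := by
  have h := (sum_eq_iff_sum_mul_moebius_eq (R := ℝ) (f := fun n => (Nat.totient n : ℝ))
    (g := fun n => (n : ℝ))).1 (fun n _ => by exact_mod_cast Nat.sum_totient n) n hn
  rw [← h, Finset.sum_div, ← Nat.sum_divisorsAntidiagonal (fun d _ => (moebius d : ℝ) / (d : ℝ))]
  refine Finset.sum_congr rfl fun x hx => ?_
  rw [Nat.mem_divisorsAntidiagonal] at hx
  obtain ⟨hx, hx0⟩ := hx
  have h1 : (x.1 : ℝ) ≠ 0 := by rintro h; apply hx0; simp at h; rw [← hx, h, zero_mul]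
  have h2 : (x.2 : ℝ) ≠ 0 := by rintro h; apply hx0; simp at h; rw [← hx, h, mul_zero]
  rw [← hx]; push_cast; field_simp

open Finset ArithmeticFunction in
theorem aux_sum (N : ℕ) :
    ∑ k ∈ Icc 1 N, (Nat.totient k : ℝ) / k
      = ∑ d ∈ Icc 1 N, (moebius d : ℝ) / d * ((N / d : ℕ) : ℝ) := by
  obtain ⟨g, hg⟩ : ∃ g : ArithmeticFunction ℝ, ∀ d, g d = (moebius d : ℝ) / d :=
    ⟨⟨fun d => (moebius d : ℝ) / d, by simp⟩, fun d => rfl⟩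
  have h := sum_Ioc_mul_zeta_eq_sum (R := ℝ) g N
  simp only [hg] at h
  have e : Icc 1 N = Ioc 0 N := by ext; simp [Nat.succ_le_iff]
  rw [e, ← h]
  refine Finset.sum_congr rfl fun k hk => ?_
  rw [Finset.mem_Ioc] at hk
  rw [aux_tot k hk.1, coe_mul_zeta_apply]
  simp only [hg]

open ArithmeticFunction in
theorem aux_hasSum : HasSum (fun d : ℕ => (moebius d : ℝ) / (d : ℝ) ^ 2) (1 / (Real.pi ^ 2 / 6)) := by
  have hs : (1 : ℝ) < (2 : ℂ).re := by norm_num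
  have h1 := (LSeriesSummable_moebius_iff.2 hs).LSeriesHasSum
  have h2 := LSeries_one_mul_Lseries_moebius hs
  rw [LSeries_one_eq_riemannZeta hs, riemannZeta_two] at h2
  have h3 := eq_one_div_of_mul_eq_one_right h2
  rw [h3] at h1
  rw [← Complex.hasSum_ofReal]
  unfold LSeriesHasSum at h1
  convert h1 using 1
  · ext d
    rcases eq_or_ne d 0 with rfl | hd
    · simp
    · rw [LSeries.term_of_ne_zero hd]
      push_cast
      norm_cast
  · push_cast; rfl

open Finset ArithmeticFunction in
theorem aux_tail (N : ℕ) (hN : 1 ≤ N) :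
    |(∑ d ∈ Icc 1 N, (moebius d : ℝ) / (d : ℝ) ^ 2) - 1 / (Real.pi ^ 2 / 6)| ≤ 1 / (N : ℝ) := by
  have ht := (aux_hasSum.tendsto_sum_nat.comp (Filter.tendsto_add_atTop_nat 1))
  have ht2 := ((ht.const_sub (∑ d ∈ Icc 1 N, (moebius d : ℝ) / (d : ℝ) ^ 2)).abs)
  refine le_of_tendsto ht2 ?_
  filter_upwards [Filter.eventually_ge_atTop N] with K hK
  have e : ∑ i ∈ range (K+1), (moebius i : ℝ) / (i : ℝ) ^ 2
      = (∑ d ∈ Icc 1 N, (moebius d : ℝ) / (d : ℝ) ^ 2)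
        + ∑ d ∈ Ioc N K, (moebius d : ℝ) / (d : ℝ) ^ 2 := by
    rw [← Finset.sum_union]
    · symm
      apply Finset.sum_subset
      · intro x; simp; omega
      · intro x h1 h2
        have : x = 0 := by simp at h1 h2; omega
        simp [this]
    · rw [Finset.disjoint_left]; intro x; simp; omega
  simp only [Function.comp]
  rw [e, sub_add_cancel_left, abs_neg]
  calc |∑ d ∈ Ioc N K, (moebius d : ℝ) / (d : ℝ) ^ 2|
      ≤ ∑ d ∈ Ioc N K, |(moebius d : ℝ) / (d : ℝ) ^ 2| := Finset.abs_sum_le_sum_abs _ _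
    _ ≤ ∑ d ∈ Ioc N K, ((d : ℝ) ^ 2)⁻¹ := by
        refine Finset.sum_le_sum fun d _ => ?_
        have : |(moebius d : ℝ)| ≤ 1 := by exact_mod_cast abs_moebius_le_one (n := d)
        rw [abs_div, abs_of_nonneg (sq_nonneg (d : ℝ)), div_eq_mul_inv]
        exact mul_le_of_le_one_left (by positivity) this
    _ ≤ (N : ℝ)⁻¹ - (K : ℝ)⁻¹ := sum_Ioc_inv_sq_le_sub (by omega) hK
    _ ≤ 1 / N := by
        have : (0 : ℝ) ≤ (K : ℝ)⁻¹ := by positivity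
        rw [one_div]; linarith

open Finset ArithmeticFunction in
theorem aux_S (N : ℕ) (hN : 1 ≤ N) :
    |(∑ k ∈ Icc 1 N, (Nat.totient k : ℝ) / k) - 1 / (Real.pi ^ 2 / 6) * N| ≤ 2 + Real.log N := by
  have hN0 : (0 : ℝ) < N := by exact_mod_cast hN
  have h1 := aux_tail N hN
  have h2 : |(∑ k ∈ Icc 1 N, (Nat.totient k : ℝ) / k)
      - N * ∑ d ∈ Icc 1 N, (moebius d : ℝ) / (d : ℝ) ^ 2| ≤ 1 + Real.log N := by
    rw [aux_sum, Finset.mul_sum, ← Finset.sum_sub_distrib]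
    refine (Finset.abs_sum_le_sum_abs _ _).trans ?_
    have hh := harmonic_le_one_add_log N
    rw [harmonic_eq_sum_Icc] at hh
    push_cast at hh
    refine le_trans (Finset.sum_le_sum fun d hd => ?_) hh
    rw [Finset.mem_Icc] at hd
    have hd0 : (0 : ℝ) < d := by exact_mod_cast hd.1
    have e : (moebius d : ℝ) / d * ((N / d : ℕ) : ℝ) - N * ((moebius d : ℝ) / (d : ℝ) ^ 2)
        = (moebius d : ℝ) * (d : ℝ)⁻¹ * (((N / d : ℕ) : ℝ) - N / d) := by
      field_simp
    have hm : |(moebius d : ℝ)| ≤ 1 := by exact_mod_cast abs_moebius_le_one (n := d)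
    have hf : |((N / d : ℕ) : ℝ) - N / d| ≤ 1 := by
      have a1 : ((N / d : ℕ) : ℝ) ≤ N / d := Nat.cast_div_le
      have a2 : (N : ℝ) / d < ((N / d : ℕ) : ℝ) + 1 := by
        rw [div_lt_iff₀ hd0]
        have := Nat.lt_div_mul_add (a := N) (b := d) (by omega)
        have h3 : N < (N / d + 1) * d := by rw [add_mul, one_mul]; exact this
        exact_mod_cast h3
      rw [abs_le]; constructor <;> linarith
    rw [e, abs_mul, abs_mul, abs_of_pos (inv_pos.2 hd0)]
    have : 0 < (d : ℝ)⁻¹ := inv_pos.2 hd0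
    calc _ ≤ 1 * (d : ℝ)⁻¹ * 1 := by gcongr
      _ = _ := by ring
  have h3 : |N * (∑ d ∈ Icc 1 N, (moebius d : ℝ) / (d : ℝ) ^ 2)
      - 1 / (Real.pi ^ 2 / 6) * N| ≤ 1 := by
    have : N * (∑ d ∈ Icc 1 N, (moebius d : ℝ) / (d : ℝ) ^ 2) - 1 / (Real.pi ^ 2 / 6) * N
      = N * ((∑ d ∈ Icc 1 N, (moebius d : ℝ) / (d : ℝ) ^ 2) - 1 / (Real.pi ^ 2 / 6)) := by ring
    rw [this, abs_mul, abs_of_pos hN0]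
    calc _ ≤ (N : ℝ) * (1 / N) := by gcongr
      _ = 1 := by field_simp
  have := abs_sub_le (∑ k ∈ Icc 1 N, (Nat.totient k : ℝ) / k)
    (N * ∑ d ∈ Icc 1 N, (moebius d : ℝ) / (d : ℝ) ^ 2) (1 / (Real.pi ^ 2 / 6) * N)
  linarith

theorem stmt7 :
    ∃ C : ℝ, 0 < C ∧ ∀ M : ℝ, 1 ≤ M →
      |(∑ x ∈ Finset.Icc 1 ⌊M⌋₊, ∑ y ∈ Finset.Icc 1 ⌊M⌋₊,
          if M < (x : ℝ) + (y : ℝ) ∧ Nat.gcd x y = 1 then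
            ((x : ℝ) + (y : ℝ) - M) / ((x : ℝ) * (y : ℝ))
          else 0)
        - (2 / (Real.pi ^ 2 / 6) - 1) * M| ≤ C * (1 + Real.log M) := by
  refine ⟨6, by norm_num, fun M hM => ?_⟩
  have hn : 1 ≤ ⌊M⌋₊ := Nat.le_floor (by simpa using hM)
  have hle : (⌊M⌋₊ : ℝ) ≤ M := Nat.floor_le (by linarith)
  have hlt : M < (⌊M⌋₊ : ℝ) + 1 := Nat.lt_floor_add_one M
  have hfl : ∀ k : ℕ, M < (k : ℝ) ↔ ⌊M⌋₊ < k := fun k => (Nat.floor_lt (by linarith)).symm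
  have hG := aux_G _ hn
  have hH := aux_H _ hn
  have hS := aux_S _ hn
  set n := ⌊M⌋₊ with hndef
  have hF : (∑ x ∈ Finset.Icc 1 n, ∑ y ∈ Finset.Icc 1 n,
          if M < (x : ℝ) + (y : ℝ) ∧ Nat.gcd x y = 1 then
            ((x : ℝ) + (y : ℝ) - M) / ((x : ℝ) * (y : ℝ))
          else 0) = 2 * (∑ k ∈ Finset.Icc 1 n, (Nat.totient k : ℝ) / k) - M * 1 := by
    rw [← hH, ← hG, Finset.mul_sum, ← Finset.sum_sub_distrib]
    refine Finset.sum_congr rfl fun x _ => ?_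
    rw [Finset.mul_sum, ← Finset.sum_sub_distrib]
    refine Finset.sum_congr rfl fun y _ => ?_
    have : M < (x : ℝ) + (y : ℝ) ↔ n < x + y := by rw [← hfl]; push_cast; rfl
    simp only [this]
    split_ifs
    · ring
    · simp
  rw [hF]
  have hpi : Real.pi ^ 2 / 6 ≥ 1 := by nlinarith [Real.pi_gt_three]
  have hc1 : 1 / (Real.pi ^ 2 / 6) ≤ 1 := by rw [div_le_one (by linarith)]; exact hpi
  have hc0 : 0 ≤ 1 / (Real.pi ^ 2 / 6) := by positivity
  have h2 : 2 / (Real.pi ^ 2 / 6) = 2 * (1 / (Real.pi ^ 2 / 6)) := by ring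
  rw [h2]
  set c := 1 / (Real.pi ^ 2 / 6)
  set S := ∑ k ∈ Finset.Icc 1 n, (Nat.totient k : ℝ) / k
  have hlog : Real.log n ≤ Real.log M := Real.log_le_log (by exact_mod_cast hn) hle
  have hlog0 : 0 ≤ Real.log M := Real.log_nonneg hM
  rw [abs_le] at hS ⊢
  have p1 : 0 ≤ c * (M - n) := mul_nonneg hc0 (by linarith)
  have p2 : c * (M - n) ≤ 1 := by
    calc c * (M - n) ≤ 1 * 1 := by gcongr; linarith
      _ = 1 := by norm_num
  constructor <;> nlinarith [hS.1, hS.2]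
end

section
/- For every ε > 0 there exists a constant C_ε > 0 with the following property. Let N, h be positive integers with 1 ≤ h ≤ 2N², let r be a positive divisor of h with r ≤ N, and set m = h/r and M = N/r (a rational number). Then |Σ_{x,y} ψ(V(x,y))| ≤ C_ε · M · (N^ε + |h − N²|/(r·N)) and |Σ_{x,y} ψ(U(x,y))| ≤ C_ε · M · (N^ε + |h − N²|/(r·N)), where both sums run over pairs of coprime positive integers x, y with x ≤ M, y ≤ M and x + y > M. Here, for such a pair (x,y), b₀ = b₀(x,y) is the unique integer with 1 ≤ b₀ ≤ y and y | (b₀·x − m), d₀ = d₀(x,y) = (m − b₀·x)/y, U(x,y) = max{(1 − b₀)/y, (d₀ − N)/x}, and V(x,y) = min{(N − b₀)/y, (d₀ − 1)/x}. -/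
/-- The saw-tooth function `ψ(t) = t − ⌊t⌋ − 1/2`. -/
noncomputable def psi (t : ℝ) : ℝ := t - ⌊t⌋ - 1 / 2

theorem psi_abs (t : ℝ) : |psi t| ≤ 1 / 2 := by
  unfold psi
  rw [abs_le]
  constructor <;> linarith [Int.floor_le t, Int.lt_floor_add_one t]

theorem psi_add_int (t : ℝ) (k : ℤ) : psi (t + k) = psi t := by
  unfold psi
  rw [Int.floor_add_intCast]
  push_cast
  ring

/-- periodicity mod `n` for numerators -/
theorem psi_congr (n : ℕ) (hn : 0 < n) (t : ℝ) (a b : ℤ) (h : (a : ZMod n) = (b : ZMod n)) :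
    psi (t + (a : ℝ) / n) = psi (t + (b : ℝ) / n) := by
  rw [ZMod.intCast_eq_intCast_iff, Int.modEq_iff_dvd] at h
  obtain ⟨c, hc⟩ := h
  have : (b : ℝ) = a + n * c := by
    have : b = a + n * c := by linarith
    rw [this]; push_cast; ring
  have hn' : (n : ℝ) ≠ 0 := by positivity
  rw [← psi_add_int _ c, this]
  congr 1
  field_simp
  ring

/-- Sum over residues. -/
theorem sum_range_zmod (n : ℕ) [NeZero n] (G : ZMod n → ℝ) :
    ∑ k ∈ Finset.range n, G (k : ZMod n) = ∑ u : ZMod n, G u := by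
  apply Finset.sum_nbij (fun k : ℕ => (k : ZMod n))
  · simp
  · intro a ha b hb hab
    simp at ha hb hab
    rw [ZMod.natCast_eq_natCast_iff'] at hab
    rwa [Nat.mod_eq_of_lt ha, Nat.mod_eq_of_lt hb] at hab
  · intro u _
    refine ⟨u.val, ?_, ?_⟩
    · simp [ZMod.val_lt]
    · simp
  · simp

theorem hermite_zmod (n : ℕ) [NeZero n] (t : ℝ) :
    |∑ u : ZMod n, psi (t + ((u.val : ℤ) : ℝ) / n)| ≤ 1 / 2 := by
  have hn : 0 < n := Nat.pos_of_ne_zero (NeZero.ne n)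
  have hn' : (0 : ℝ) < n := by exact_mod_cast hn
  set c : ℤ := ⌊(n : ℝ) * t⌋ with hc
  set s : ℝ := t - c / n with hs
  have hs0 : 0 ≤ n * s := by
    have := Int.floor_le ((n : ℝ) * t)
    have e : n * s = n * t - c := by rw [hs]; field_simp
    rw [e]; linarith
  have hs1 : n * s < 1 := by
    have := Int.lt_floor_add_one ((n : ℝ) * t)
    have e : n * s = n * t - c := by rw [hs]; field_simp
    rw [e]; linarith
  have e1 : ∑ u : ZMod n, psi (t + ((u.val : ℤ) : ℝ) / n) =
      ∑ u : ZMod n, psi (s + ((u.val : ℤ) : ℝ) / n) := by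
    rw [← Equiv.sum_comp (Equiv.addRight (c : ZMod n)) (fun u => psi (s + ((u.val : ℤ) : ℝ) / n))]
    apply Finset.sum_congr rfl
    intro u _
    have : t + ((u.val : ℤ) : ℝ) / n = s + (((u.val : ℤ) + c : ℤ) : ℝ) / n := by
      rw [hs]; push_cast; ring
    rw [this]
    apply psi_congr n hn
    simp
  have e2 : ∑ u : ZMod n, psi (s + ((u.val : ℤ) : ℝ) / n) =
      ∑ k ∈ Finset.range n, (s + (k : ℝ) / n - 1 / 2) := by
    rw [← sum_range_zmod]
    apply Finset.sum_congr rfl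
    intro k hk
    rw [Finset.mem_range] at hk
    rw [ZMod.val_natCast, Nat.mod_eq_of_lt hk]
    unfold psi
    have : ⌊s + ((k : ℤ) : ℝ) / n⌋ = 0 := by
      rw [Int.floor_eq_zero_iff]
      have e : s + ((k : ℤ) : ℝ) / n = (n * s + k) / n := by push_cast; field_simp
      have hk1 : (k : ℝ) + 1 ≤ n := by exact_mod_cast hk
      rw [e]
      constructor
      · positivity
      · rw [div_lt_one hn']; linarith
    rw [this]; simp
  have e3 : ∑ k ∈ Finset.range n, (s + (k : ℝ) / n - 1 / 2) = n * s - 1 / 2 := by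
    have h4 : ∀ j : ℕ, ∑ k ∈ Finset.range j, (s + (k : ℝ) / n - 1 / 2) =
        j * s + (j * (j - 1)) / (2 * n) - j / 2 := by
      intro j
      induction j with
      | zero => simp
      | succ j ih =>
        rw [Finset.sum_range_succ, ih]
        push_cast
        field_simp
        ring
    rw [h4]
    field_simp
    ring
  rw [e1, e2, e3, abs_le]
  constructor <;> linarith

theorem sum_range_mul_periodic (f : ℕ → ℝ) (n g : ℕ) (hf : ∀ k, f (k + n) = f k) :
    ∑ k ∈ Finset.range (g * n), f k = g * ∑ k ∈ Finset.range n, f k := by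
  induction g with
  | zero => simp
  | succ g ih =>
    have h : ∀ g k, f (g * n + k) = f k := by
      intro g k
      induction g with
      | zero => simp
      | succ g ih2 => rw [← ih2, ← hf (g * n + k)]; congr 1; ring
    rw [Nat.succ_mul, Finset.sum_range_add, ih]
    simp only [h]
    push_cast
    ring

theorem linear_sum (n : ℕ) (hn : 0 < n) (B : ℤ) (t : ℝ) :
    |∑ k ∈ Finset.range n, psi (t + (B : ℝ) * k / n)| ≤ 1 / 2 * (Int.gcd B n : ℕ) := by
  set g := Int.gcd B n with hg
  have hgpos : 0 < g := Int.gcd_pos_of_ne_zero_right _ (by exact_mod_cast hn.ne')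
  obtain ⟨B', hB'⟩ : (g : ℤ) ∣ B := Int.gcd_dvd_left ..
  obtain ⟨n', hn'⟩ : g ∣ n := by
    have : (g : ℤ) ∣ n := Int.gcd_dvd_right ..
    exact_mod_cast this
  have hn'0 : 0 < n' := by
    rcases Nat.eq_zero_or_pos n' with h | h
    · subst h; omega
    · exact h
  have : NeZero n' := ⟨hn'0.ne'⟩
  have hcop : IsUnit (B' : ZMod n') := by
    have h1 : Int.gcd B' n' = 1 := by
      have : Int.gcd ((g : ℤ) * B') ((g : ℤ) * n') = g * Int.gcd B' n' := by
        rw [Int.gcd_mul_left]; simp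
      have h2 : g = g * Int.gcd B' n' := by
        have h3 : (n : ℤ) = (g : ℤ) * n' := by exact_mod_cast hn'
        rw [← this, ← hB', ← h3]
      nlinarith
    rw [ZMod.coe_int_isUnit_iff_isCoprime]
    exact (Int.isCoprime_iff_gcd_eq_one.mpr h1).symm
  obtain ⟨w, hw⟩ := hcop
  have hgr : (g : ℝ) ≠ 0 := by positivity
  have hnr : (n' : ℝ) ≠ 0 := by positivity
  have e0 : ∀ k : ℕ, psi (t + (B : ℝ) * k / n) =
      psi (t + (((((B' * k : ℤ) : ZMod n').val : ℤ)) : ℝ) / n') := by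
    intro k
    have : t + (B : ℝ) * k / n = t + ((B' * k : ℤ) : ℝ) / n' := by
      rw [hB', hn']; push_cast; field_simp
    rw [this]
    apply psi_congr n' hn'0
    simp
  simp_rw [e0]
  have e1 : ∑ k ∈ Finset.range n, psi (t + (((((B' * k : ℤ) : ZMod n').val : ℤ)) : ℝ) / n') =
      g * ∑ u : ZMod n', psi (t + ((u.val : ℤ) : ℝ) / n') := by
    conv_lhs => rw [hn']
    rw [sum_range_mul_periodic]
    · congr 1
      rw [← Equiv.sum_comp (Units.mulLeft w) (fun u => psi (t + ((u.val : ℤ) : ℝ) / n')),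
        ← sum_range_zmod]
      apply Finset.sum_congr rfl
      intro k _
      simp [hw]
    · intro k
      simp
  rw [e1, abs_mul, Nat.abs_cast]
  have := hermite_zmod n' t
  calc (g : ℝ) * _ ≤ g * (1 / 2) := by gcongr
    _ = _ := by ring

/-- Divisor bound. -/
theorem divisor_bound (δ : ℝ) (hδ : 0 < δ) : ∃ C : ℝ, 0 < C ∧ ∀ n : ℕ, n ≠ 0 →
    (n.divisors.card : ℝ) ≤ C * (n : ℝ) ^ δ := by
  have hL : 0 < Real.log 2 := Real.log_pos (by norm_num)
  set B : ℝ := 1 + 1 / (δ * Real.log 2) with hB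
  have hB1 : 1 ≤ B := by
    have : 0 < 1 / (δ * Real.log 2) := by positivity
    linarith
  set P : ℕ := ⌈(2 : ℝ) ^ (1 / δ)⌉₊ with hP
  refine ⟨B ^ P, by positivity, ?_⟩
  intro n hn
  have key : ∀ p ∈ n.primeFactors, ((n.factorization p + 1 : ℕ) : ℝ) ≤
      (if p < P then B else 1) * ((p ^ n.factorization p : ℕ) : ℝ) ^ δ := by
    intro p hp
    have hp2 : 2 ≤ p := (Nat.prime_of_mem_primeFactors hp).two_le
    generalize n.factorization p = a
    have hpr : (2 : ℝ) ≤ p := by exact_mod_cast hp2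
    split_ifs with h
    · have h1 : Real.exp (a * (δ * Real.log 2)) ≤ ((p ^ a : ℕ) : ℝ) ^ δ := by
        have : Real.exp (a * (δ * Real.log 2)) = ((2 : ℝ) ^ a) ^ δ := by
          rw [Real.rpow_def_of_pos (by positivity), Real.log_pow]
          ring_nf
        rw [this]
        push_cast
        gcongr
      have h2 := Real.add_one_le_exp (a * (δ * Real.log 2))
      have h3 : (a : ℝ) + 1 ≤ B * (a * (δ * Real.log 2) + 1) := by
        have : B * (a * (δ * Real.log 2) + 1) =
          a * (δ * Real.log 2) + 1 + a + 1 / (δ * Real.log 2) := by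
          rw [hB]; field_simp; ring
        rw [this]
        have : 0 ≤ a * (δ * Real.log 2) + 1 / (δ * Real.log 2) := by positivity
        linarith
      push_cast at h1 ⊢
      calc (a : ℝ) + 1 ≤ B * (a * (δ * Real.log 2) + 1) := h3
        _ ≤ _ := by gcongr; linarith
    · push Not at h
      have h1 : (2 : ℝ) ^ (1 / δ) ≤ p := (Nat.le_ceil _).trans (by exact_mod_cast h)
      have h2 : (2 : ℝ) ≤ (p : ℝ) ^ δ := by
        calc (2 : ℝ) = ((2 : ℝ) ^ (1 / δ)) ^ δ := by
              rw [← Real.rpow_mul (by norm_num)]; field_simp; simp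
          _ ≤ _ := by gcongr
      have h3 : ((p ^ a : ℕ) : ℝ) ^ δ = ((p : ℝ) ^ δ) ^ a := by
        push_cast
        rw [← Real.rpow_natCast, ← Real.rpow_natCast, ← Real.rpow_mul (by positivity),
          ← Real.rpow_mul (by positivity), mul_comm]
      rw [h3, one_mul]
      have h4 : ((a + 1 : ℕ) : ℝ) ≤ (2 : ℝ) ^ a := by
        exact_mod_cast Nat.lt_two_pow_self
      exact h4.trans (by gcongr)
  rw [Nat.card_divisors hn]
  push_cast
  have e1 : ((n : ℝ)) ^ δ = ∏ p ∈ n.primeFactors, ((p ^ n.factorization p : ℕ) : ℝ) ^ δ := by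
    rw [Real.finsetProd_rpow _ _ (fun i _ => by positivity)]
    congr 1
    conv_lhs => rw [← Nat.prod_factorization_pow_eq_self hn]
    rw [Finsupp.prod]
    push_cast
    rfl
  rw [e1]
  calc _ ≤ ∏ p ∈ n.primeFactors,
        (if p < P then B else 1) * ((p ^ n.factorization p : ℕ) : ℝ) ^ δ := by
        apply Finset.prod_le_prod
        · intros; positivity
        · intro i hi
          have := key i hi
          push_cast at this ⊢
          exact this
    _ = (∏ p ∈ n.primeFactors, (if p < P then B else 1)) *
        ∏ p ∈ n.primeFactors, ((p ^ n.factorization p : ℕ) : ℝ) ^ δ := Finset.prod_mul_distrib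
    _ ≤ _ := by
        gcongr
        rw [Finset.prod_ite]
        simp only [Finset.prod_const, one_pow, mul_one]
        apply pow_le_pow_right₀ hB1
        calc _ ≤ (Finset.range P).card := by
              apply Finset.card_le_card
              intro p hp
              simp at hp ⊢
              exact hp.2
          _ = P := by simp

theorem sum_moebius_divisors (k : ℕ) (hk : k ≠ 0) :
    ∑ e ∈ k.divisors, ArithmeticFunction.moebius e = if k = 1 then 1 else 0 := by
  have h := congrArg (fun f : ArithmeticFunction ℤ => f k) ArithmeticFunction.moebius_mul_coe_zeta
  simp only [ArithmeticFunction.coe_mul_zeta_apply, ArithmeticFunction.one_apply] at h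
  exact h

theorem coprime_sum (y : ℕ) (hy : 0 < y) (A B : ℤ) :
    |∑ a ∈ Finset.range y, if Nat.gcd a y = 1 then psi ((A : ℝ) / y + (B : ℝ) * a / y) else 0| ≤
      1 / 2 * ∑ n ∈ y.divisors, (Int.gcd B n : ℝ) := by
  set f : ℕ → ℝ := fun a => psi ((A : ℝ) / y + (B : ℝ) * a / y) with hf
  have e1 : ∑ a ∈ Finset.range y, (if Nat.gcd a y = 1 then f a else 0) =
      ∑ e ∈ y.divisors, (ArithmeticFunction.moebius e : ℝ) *
        ∑ k ∈ Finset.range (y / e), f (e * k) := by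
    have : ∀ a ∈ Finset.range y, (if Nat.gcd a y = 1 then f a else 0) =
        ∑ e ∈ y.divisors, if e ∣ a then (ArithmeticFunction.moebius e : ℝ) * f a else 0 := by
      intro a _
      have hg : Nat.gcd a y ≠ 0 := (Nat.gcd_pos_of_pos_right _ hy).ne'
      have h1 := sum_moebius_divisors _ hg
      rw [← Finset.sum_filter, ← Finset.sum_mul]
      have h2 : y.divisors.filter (fun e => e ∣ a) = (Nat.gcd a y).divisors := by
        ext e
        simp only [Finset.mem_filter, Nat.mem_divisors, Nat.dvd_gcd_iff]
        have := hy.ne'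
        tauto
      rw [h2, ← Int.cast_sum, h1]
      split_ifs <;> simp
    rw [Finset.sum_congr rfl this, Finset.sum_comm]
    apply Finset.sum_congr rfl
    intro e he
    rw [Nat.mem_divisors] at he
    obtain ⟨⟨q, hq⟩, _⟩ := he
    have he0 : 0 < e := by
      rcases Nat.eq_zero_or_pos e with h | h
      · subst h; omega
      · exact h
    rw [← Finset.sum_filter, Finset.mul_sum]
    symm
    have hyq : y / e = q := by rw [hq]; exact Nat.mul_div_cancel_left _ he0
    rw [hyq]
    apply Finset.sum_nbij (fun k => e * k)
    · intro k hk
      simp only [Finset.mem_range, Finset.mem_filter] at hk ⊢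
      refine ⟨?_, dvd_mul_right _ _⟩
      rw [hq]; gcongr
    · intro a _ b _ hab
      exact Nat.eq_of_mul_eq_mul_left he0 hab
    · intro a ha
      simp only [Finset.coe_filter, Finset.mem_range, Set.mem_ofPred_eq] at ha
      obtain ⟨h1, k, rfl⟩ := ha
      refine ⟨k, ?_, rfl⟩
      simp only [Finset.coe_range, Set.mem_Iio]
      rw [hq] at h1
      exact lt_of_mul_lt_mul_left h1 (Nat.zero_le _)
    · intro k _; rfl
  rw [e1]
  rw [← Nat.sum_div_divisors y (fun n => (Int.gcd B n : ℝ)), Finset.mul_sum]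
  refine (Finset.abs_sum_le_sum_abs _ _).trans (Finset.sum_le_sum ?_)
  intro e he
  rw [Nat.mem_divisors] at he
  obtain ⟨⟨q, hq⟩, _⟩ := he
  have he0 : 0 < e := by
    rcases Nat.eq_zero_or_pos e with h | h
    · subst h; omega
    · exact h
  have hq0 : 0 < q := by
    rcases Nat.eq_zero_or_pos q with h | h
    · subst h; omega
    · exact h
  have hyq : y / e = q := by rw [hq]; exact Nat.mul_div_cancel_left _ he0
  rw [hyq, abs_mul]
  have h1 : |(ArithmeticFunction.moebius e : ℝ)| ≤ 1 := by
    exact_mod_cast ArithmeticFunction.abs_moebius_le_one (n := e)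
  have h2 := linear_sum q hq0 B ((A : ℝ) / y)
  have h3 : ∀ k : ℕ, f (e * k) = psi ((A : ℝ) / y + (B : ℝ) * k / q) := by
    intro k
    simp only [hf]
    congr 2
    rw [hq]; push_cast
    have : (e : ℝ) ≠ 0 := by positivity
    have : (q : ℝ) ≠ 0 := by positivity
    field_simp
  simp_rw [h3]
  calc _ ≤ 1 * |∑ k ∈ Finset.range q, psi ((A : ℝ) / y + (B : ℝ) * k / q)| := by gcongr
    _ ≤ _ := by rw [one_mul]; exact h2

theorem sum_Ioc_zmod (y K : ℕ) [NeZero y] (hyK : y ≤ K) (G : ZMod y → ℝ) :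
    ∑ x ∈ Finset.Ioc (K - y) K, G (x : ZMod y) = ∑ u : ZMod y, G u := by
  have hinj : Set.InjOn (fun k : ℕ => (k : ZMod y)) (Finset.Ioc (K - y) K) := by
    intro a ha b hb hab
    simp only [Finset.coe_Ioc, Set.mem_Ioc] at ha hb
    have h : ((a : ℤ) : ZMod y) = ((b : ℤ) : ZMod y) := by exact_mod_cast hab
    rw [ZMod.intCast_eq_intCast_iff, Int.modEq_iff_dvd] at h
    have := Int.eq_zero_of_abs_lt_dvd h (by rw [abs_lt]; omega)
    omega
  have himg : (Finset.Ioc (K - y) K).image (fun k : ℕ => (k : ZMod y)) = Finset.univ := by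
    apply Finset.eq_univ_of_card
    rw [Finset.card_image_of_injOn hinj, ZMod.card]
    simp; omega
  rw [← himg, Finset.sum_image hinj]

theorem residue_sum (y K : ℕ) (hy : 0 < y) (hyK : y ≤ K) (m A σ : ℤ) (c : ℕ → ℤ)
    (hc : ∀ x, 0 < x → Nat.gcd x y = 1 → (y : ℤ) ∣ c x * x - m) :
    |∑ x ∈ Finset.Ioc (K - y) K, if Nat.gcd x y = 1 then
        psi (((A : ℝ) + σ * c x) / y) else 0| ≤
      1 / 2 * ∑ n ∈ y.divisors, (Int.gcd (σ * m) n : ℝ) := by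
  have : NeZero y := ⟨hy.ne'⟩
  classical
  set G : ZMod y → ℝ := fun u => psi ((A : ℝ) / y + ((σ * (u.val : ℤ) : ℤ) : ℝ) / y) with hG
  have hGc : ∀ c : ℤ, psi ((A : ℝ) / y + ((σ * c : ℤ) : ℝ) / y) = G (c : ZMod y) := by
    intro c
    simp only [hG]
    apply psi_congr y hy
    simp
  have e1 : ∀ x ∈ Finset.Ioc (K - y) K, (if Nat.gcd x y = 1 then
        psi (((A : ℝ) + σ * c x) / y) else 0) =
      (fun u : ZMod y => if h : IsUnit u then G (m * ((h.unit⁻¹ : (ZMod y)ˣ) : ZMod y)) else 0)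
        (x : ZMod y) := by
    intro x hx
    have hx0 : 0 < x := by rw [Finset.mem_Ioc] at hx; omega
    have hiff : IsUnit (x : ZMod y) ↔ Nat.gcd x y = 1 := by
      rw [ZMod.isUnit_iff_coprime]
    by_cases h : Nat.gcd x y = 1
    · have hu := hiff.mpr h
      simp only [h, if_true, hu, dif_pos]
      have e : ((A : ℝ) + σ * c x) / y = (A : ℝ) / y + ((σ * c x : ℤ) : ℝ) / y := by
        push_cast; ring
      rw [e, hGc]
      congr 1
      have h1 := hc x hx0 h
      rw [← ZMod.intCast_zmod_eq_zero_iff_dvd] at h1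
      push_cast at h1
      rw [sub_eq_zero] at h1
      rw [Units.eq_mul_inv_iff_mul_eq]
      simpa using h1
    · have hu : ¬ IsUnit (x : ZMod y) := fun h' => h (hiff.mp h')
      simp only [h, if_false, hu, dif_neg, not_false_eq_true]
  rw [Finset.sum_congr rfl e1, sum_Ioc_zmod y K hyK (fun u : ZMod y => if h : IsUnit u then
    G (m * ((h.unit⁻¹ : (ZMod y)ˣ) : ZMod y)) else 0)]
  have units_sum : ∀ F : (ZMod y)ˣ → ℝ,
      ∑ u : ZMod y, (if h : IsUnit u then F h.unit else 0) = ∑ v : (ZMod y)ˣ, F v := by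
    intro F
    symm
    rw [← Finset.sum_filter_add_sum_filter_not Finset.univ (fun u : ZMod y => IsUnit u)]
    rw [Finset.sum_eq_zero (s := Finset.univ.filter (fun u : ZMod y => ¬ IsUnit u))]
    · rw [add_zero]
      apply Finset.sum_nbij (fun v : (ZMod y)ˣ => (v : ZMod y))
      · intro v _; simp
      · intro a _ b _ hab; exact Units.ext hab
      · intro u hu
        simp at hu
        exact ⟨hu.unit, by simp, rfl⟩
      · intro v _
        simp
    · intro u hu
      simp at hu
      simp [hu]
  rw [units_sum (fun v => G (m * ((v⁻¹ : (ZMod y)ˣ) : ZMod y)))]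
  have e2 : ∑ v : (ZMod y)ˣ, G (m * ((v⁻¹ : (ZMod y)ˣ) : ZMod y)) =
      ∑ v : (ZMod y)ˣ, G (m * (v : ZMod y)) :=
    Equiv.sum_comp (Equiv.inv (ZMod y)ˣ) (fun v => G (m * (v : ZMod y)))
  rw [e2]
  rw [← units_sum (fun v => G (m * (v : ZMod y))), ← sum_range_zmod]
  refine le_trans (le_of_eq ?_) (coprime_sum y hy A (σ * m))
  congr 1
  apply Finset.sum_congr rfl
  intro a _
  have hiff : IsUnit (a : ZMod y) ↔ Nat.gcd a y = 1 := by
    rw [ZMod.isUnit_iff_coprime]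
  by_cases h : Nat.gcd a y = 1
  · have hu := hiff.mpr h
    simp only [h, if_true, hu, dif_pos]
    have := hGc (m * a)
    push_cast at this
    simp only [IsUnit.unit_spec]
    rw [← this]
    push_cast
    ring_nf
  · have hu : ¬ IsUnit (a : ZMod y) := fun h' => h (hiff.mp h')
    simp only [h, if_false, hu, dif_neg, not_false_eq_true]

theorem gcd_sum_bound (K m : ℕ) (hm : m ≠ 0) :
    ∑ y ∈ Finset.Icc 1 K, ∑ n ∈ y.divisors, (Nat.gcd m n : ℝ) ≤
      m.divisors.card * (K * (1 + Real.log K)) := by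
  have h1 : ∀ y ∈ Finset.Icc 1 K, ∑ n ∈ y.divisors, (Nat.gcd m n : ℝ) ≤
      ∑ g ∈ m.divisors, ∑ q ∈ Finset.Icc 1 K, if g * q ∣ y then (g : ℝ) else 0 := by
    intro y hy
    rw [Finset.mem_Icc] at hy
    have h2 : ∀ n ∈ y.divisors, (Nat.gcd m n : ℝ) ≤
        ∑ g ∈ m.divisors, ∑ q ∈ Finset.Icc 1 K, if g * q = n then (g : ℝ) else 0 := by
      intro n hn
      rw [Nat.mem_divisors] at hn
      have hn0 : 0 < n := Nat.pos_of_dvd_of_pos hn.1 (by omega)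
      have hnK : n ≤ K := (Nat.le_of_dvd (by omega) hn.1).trans hy.2
      have hgm : Nat.gcd m n ∈ m.divisors := by
        rw [Nat.mem_divisors]; exact ⟨Nat.gcd_dvd_left _ _, hm⟩
      obtain ⟨q, hq⟩ := Nat.gcd_dvd_right m n
      have hq0 : 0 < q := by
        rcases Nat.eq_zero_or_pos q with h | h
        · rw [h, mul_zero] at hq; omega
        · exact h
      have hqK : q ≤ K := (Nat.le_of_dvd hn0 ⟨_, hq.trans (mul_comm _ _)⟩).trans hnK
      refine le_trans ?_ (Finset.single_le_sum (f := fun g : ℕ =>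
        ∑ q ∈ Finset.Icc 1 K, if g * q = n then (g : ℝ) else 0) ?_ hgm)
      · refine le_trans ?_ (Finset.single_le_sum (f := fun q : ℕ =>
          if Nat.gcd m n * q = n then (Nat.gcd m n : ℝ) else 0) ?_
          (Finset.mem_Icc.mpr ⟨hq0, hqK⟩))
        · simp only [← hq, if_true, le_refl]
        · intro i _; split_ifs <;> positivity
      · intro i _; apply Finset.sum_nonneg; intro j _; split_ifs <;> positivity
    refine (Finset.sum_le_sum h2).trans ?_
    rw [Finset.sum_comm]
    apply Finset.sum_le_sum
    intro g _
    rw [Finset.sum_comm]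
    apply Finset.sum_le_sum
    intro q _
    rw [Finset.sum_ite_eq]
    simp only [Nat.mem_divisors]
    split_ifs with h3 h4 h4
    · exact le_refl _
    · exact absurd h3.1 h4
    · positivity
    · exact le_refl _
  refine (Finset.sum_le_sum h1).trans ?_
  rw [Finset.sum_comm, ← nsmul_eq_mul]
  apply Finset.sum_le_card_nsmul
  intro g hg
  have hg0 : 0 < g := Nat.pos_of_mem_divisors hg
  rw [Finset.sum_comm]
  have h5 : ∀ q ∈ Finset.Icc 1 K, (∑ y ∈ Finset.Icc 1 K, if g * q ∣ y then (g : ℝ) else 0) ≤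
      K * (q : ℝ)⁻¹ := by
    intro q hq
    rw [Finset.mem_Icc] at hq
    rw [← Finset.sum_filter, Finset.sum_const, nsmul_eq_mul]
    have h6 : ((Finset.Icc 1 K).filter (fun y => g * q ∣ y)).card = K / (g * q) :=
      Nat.Ioc_filter_dvd_card_eq_div K (g * q)
    rw [h6]
    have h7 : ((K / (g * q) : ℕ) : ℝ) ≤ (K : ℝ) / ((g * q : ℕ) : ℝ) := Nat.cast_div_le
    have hgr : (0 : ℝ) < g := by exact_mod_cast hg0
    have hqr : (0 : ℝ) < q := by exact_mod_cast hq.1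
    calc _ ≤ (K : ℝ) / ((g * q : ℕ) : ℝ) * g := by gcongr
      _ = _ := by push_cast; field_simp
  refine (Finset.sum_le_sum h5).trans ?_
  rw [← Finset.mul_sum]
  gcongr
  have h8 := harmonic_le_one_add_log K
  rw [harmonic_eq_sum_Icc] at h8
  push_cast at h8
  exact h8

theorem exists_residue (x y : ℕ) (m : ℤ) (hy : 0 < y) (h : Nat.gcd x y = 1) :
    ∃ b : ℤ, (1 ≤ b ∧ b ≤ y) ∧ ∀ b' : ℤ, 1 ≤ b' → b' ≤ y →
      ((y : ℤ) ∣ b' * x - m ↔ b' = b) := by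
  have hcop : IsCoprime (x : ℤ) (y : ℤ) := Nat.isCoprime_iff_coprime.mpr h
  obtain ⟨u, v, huv⟩ := hcop
  have hyz : (0 : ℤ) < y := by exact_mod_cast hy
  refine ⟨(m * u - 1) % y + 1, ⟨?_, ?_⟩, ?_⟩
  · have := Int.emod_nonneg (m * u - 1) hyz.ne'
    omega
  · have := Int.emod_lt_of_pos (m * u - 1) hyz
    omega
  · have hdvd : (y : ℤ) ∣ ((m * u - 1) % y + 1) * x - m := by
      have h1 := Int.emod_add_mul_ediv (m * u - 1) y
      refine ⟨-((m * u - 1) / y) * x - m * v, ?_⟩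
      have h2 : (m * u - 1) % y = m * u - 1 - y * ((m * u - 1) / y) := by linarith
      rw [h2]
      linear_combination m * huv
    intro b' hb1 hb2
    constructor
    · intro hb
      have h3 : (y : ℤ) ∣ (b' - ((m * u - 1) % y + 1)) * x := by
        have e : (b' - ((m * u - 1) % y + 1)) * x =
            (b' * x - m) - (((m * u - 1) % y + 1) * x - m) := by ring
        rw [e]
        exact dvd_sub hb hdvd
      have h4 : IsCoprime (y : ℤ) (x : ℤ) := ⟨v, u, by linarith⟩
      have h5 := h4.dvd_of_dvd_mul_right h3
      have h6 := Int.emod_nonneg (m * u - 1) hyz.ne'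
      have h7 := Int.emod_lt_of_pos (m * u - 1) hyz
      have := Int.eq_zero_of_abs_lt_dvd h5 (by rw [abs_lt]; omega)
      omega
    · rintro rfl
      exact hdvd

theorem reduce_sum (N r m : ℕ) (hr : 0 < r) :
    ∃ b : ℕ → ℕ → ℤ, (∀ x y, 0 < y → Nat.gcd x y = 1 → (y : ℤ) ∣ b x y * x - m) ∧
      ∀ g : ℕ → ℕ → ℤ → ℝ,
        ∑ x ∈ Finset.Icc 1 N, ∑ y ∈ Finset.Icc 1 N, ∑ b ∈ Finset.Icc (1 : ℤ) (y : ℤ),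
          (if x * r ≤ N ∧ y * r ≤ N ∧ N < (x + y) * r ∧ Nat.gcd x y = 1 ∧
            (y : ℤ) ∣ (b * (x : ℤ) - (m : ℤ)) then g x y b else 0) =
        ∑ x ∈ Finset.Icc 1 (N / r), ∑ y ∈ Finset.Icc 1 (N / r),
          if N / r < x + y ∧ Nat.gcd x y = 1 then g x y (b x y) else 0 := by
  have hex : ∀ x y : ℕ, ∃ b : ℤ, 0 < y → Nat.gcd x y = 1 → (1 ≤ b ∧ b ≤ y) ∧
      ∀ b' : ℤ, 1 ≤ b' → b' ≤ y → ((y : ℤ) ∣ b' * x - m ↔ b' = b) := by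
    intro x y
    by_cases h : 0 < y ∧ Nat.gcd x y = 1
    · obtain ⟨b, hb⟩ := exists_residue x y m h.1 h.2
      exact ⟨b, fun _ _ => hb⟩
    · exact ⟨0, fun h1 h2 => absurd ⟨h1, h2⟩ h⟩
  choose b hb using hex
  refine ⟨b, ?_, ?_⟩
  · intro x y hy h
    obtain ⟨⟨h1, h2⟩, h3⟩ := hb x y hy h
    exact (h3 _ h1 h2).mpr rfl
  · intro g
    have hKN : N / r ≤ N := Nat.div_le_self _ _
    have hle : ∀ z : ℕ, z * r ≤ N ↔ z ≤ N / r := fun z => (Nat.le_div_iff_mul_le hr).symm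
    have hlt : ∀ z : ℕ, N < z * r ↔ N / r < z := fun z => (Nat.div_lt_iff_lt_mul hr).symm
    have hsub : Finset.Icc 1 (N / r) ⊆ Finset.Icc 1 N := Finset.Icc_subset_Icc_right hKN
    symm
    rw [← Finset.sum_subset hsub]
    · apply Finset.sum_congr rfl
      intro x hx
      rw [← Finset.sum_subset hsub]
      · apply Finset.sum_congr rfl
        intro y hy
        rw [Finset.mem_Icc] at hx hy
        simp only [hle, hlt, hx.2, hy.2, true_and]
        by_cases h : N / r < x + y ∧ Nat.gcd x y = 1
        · obtain ⟨h1, h3⟩ := hb x y hy.1 h.2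
          rw [if_pos h, Finset.sum_eq_single (b x y)]
          · rw [if_pos]
            exact ⟨h.1, h.2, (h3 _ h1.1 h1.2).mpr rfl⟩
          · intro b' hb' hne
            rw [Finset.mem_Icc] at hb'
            rw [if_neg]
            rintro ⟨_, _, h5⟩
            exact hne ((h3 _ hb'.1 hb'.2).mp h5)
          · intro hn
            exact absurd (Finset.mem_Icc.mpr h1) hn
        · rw [if_neg h, Finset.sum_eq_zero]
          intro b' _
          rw [if_neg]
          rintro ⟨h1, h2, _⟩
          exact h ⟨h1, h2⟩
      · intro y hy hy'
        apply Finset.sum_eq_zero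
        intro b' _
        rw [if_neg]
        rintro ⟨_, h2, _⟩
        rw [hle] at h2
        rw [Finset.mem_Icc] at hy hy'
        exact hy' ⟨hy.1, h2⟩
    · intro x hx hx'
      apply Finset.sum_eq_zero
      intro y _
      apply Finset.sum_eq_zero
      intro b' _
      rw [if_neg]
      rintro ⟨h2, _⟩
      rw [hle] at h2
      rw [Finset.mem_Icc] at hx hx'
      exact hx' ⟨hx.1, h2⟩

/-- A complete main sum. -/
theorem main_sum (K m : ℕ) (hm : m ≠ 0) (A σ : ℤ) (hσ : σ = 1 ∨ σ = -1) (c : ℕ → ℕ → ℤ)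
    (hc : ∀ x y, 0 < x → 0 < y → Nat.gcd x y = 1 → (y : ℤ) ∣ c x y * x - m) :
    |∑ y ∈ Finset.Icc 1 K, ∑ x ∈ Finset.Icc 1 K, if K < x + y ∧ Nat.gcd x y = 1 then
        psi (((A : ℝ) + σ * c x y) / y) else 0| ≤
      m.divisors.card * (K * (1 + Real.log K)) := by
  have h1 : ∀ y ∈ Finset.Icc 1 K,
      |∑ x ∈ Finset.Icc 1 K, if K < x + y ∧ Nat.gcd x y = 1 then
        psi (((A : ℝ) + σ * c x y) / y) else 0| ≤ ∑ n ∈ y.divisors, (Nat.gcd m n : ℝ) := by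
    intro y hy
    rw [Finset.mem_Icc] at hy
    have h2 := residue_sum y K hy.1 hy.2 m A σ (fun x => c x y) (fun x hx h => hc x y hx hy.1 h)
    have h3 : ∀ n : ℕ, Int.gcd (σ * m) n = Nat.gcd m n := by
      intro n
      rcases hσ with rfl | rfl <;> simp
    simp_rw [h3] at h2
    have h4 : ∑ x ∈ Finset.Icc 1 K, (if K < x + y ∧ Nat.gcd x y = 1 then
        psi (((A : ℝ) + σ * c x y) / y) else 0) = ∑ x ∈ Finset.Ioc (K - y) K,
        if Nat.gcd x y = 1 then psi (((A : ℝ) + σ * c x y) / y) else 0 := by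
      rw [← Finset.sum_filter, ← Finset.sum_filter]
      apply Finset.sum_congr _ (fun _ _ => rfl)
      ext x
      simp only [Finset.mem_filter, Finset.mem_Icc, Finset.mem_Ioc]
      constructor
      · rintro ⟨h5, h6, h7⟩
        exact ⟨by omega, h7⟩
      · rintro ⟨h5, h6⟩
        exact ⟨by omega, by omega, h6⟩
    rw [h4]
    have h5 : 0 ≤ ∑ n ∈ y.divisors, (Nat.gcd m n : ℝ) := Finset.sum_nonneg (fun _ _ => by positivity)
    linarith
  exact ((Finset.abs_sum_le_sum_abs _ _).trans (Finset.sum_le_sum h1)).trans (gcd_sum_bound K m hm)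

/-- Comparison with the main sum. -/
theorem swap_bound (N h r K m : ℕ) (hN : 0 < N) (hr : 0 < r) (hK : K = N / r) (hm : h = r * m)
    (f g : ℕ → ℕ → ℝ) (P : ℕ → ℕ → Prop) [∀ x y, Decidable (P x y)]
    (hfg : ∀ x y, x ∈ Finset.Icc 1 K → y ∈ Finset.Icc 1 K → P x y →
      N * x + y ≤ m → psi (f x y) = psi (g x y)) :
    |(∑ y ∈ Finset.Icc 1 K, ∑ x ∈ Finset.Icc 1 K, if P x y then psi (f x y) else 0) -
      (∑ y ∈ Finset.Icc 1 K, ∑ x ∈ Finset.Icc 1 K, if P x y then psi (g x y) else 0)| ≤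
      (N : ℝ) / r * (2 + |(h : ℝ) - (N : ℝ) ^ 2| / ((r : ℝ) * (N : ℝ))) := by
  have hNr : (0 : ℝ) < N := by exact_mod_cast hN
  have hrr : (0 : ℝ) < r := by exact_mod_cast hr
  have hKM : (K : ℝ) ≤ N / r := by rw [hK]; exact Nat.cast_div_le
  have hKN : K ≤ N := by rw [hK]; exact Nat.div_le_self _ _
  set D := |(h : ℝ) - (N : ℝ) ^ 2| / ((r : ℝ) * (N : ℝ)) with hD
  have hD0 : 0 ≤ D := by positivity
  have hD1 : (N : ℝ) / r - (m : ℝ) / N ≤ D := by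
    have e : (N : ℝ) / r - (m : ℝ) / N = -((h : ℝ) - (N : ℝ) ^ 2) / ((r : ℝ) * (N : ℝ)) := by
      rw [hm]; push_cast; field_simp; ring
    rw [e, hD]
    gcongr
    exact neg_le_abs _
  rw [← Finset.sum_sub_distrib]
  have h1 : ∀ y ∈ Finset.Icc 1 K,
      |(∑ x ∈ Finset.Icc 1 K, if P x y then psi (f x y) else 0) -
      (∑ x ∈ Finset.Icc 1 K, if P x y then psi (g x y) else 0)| ≤ 2 + D := by
    intro y hy
    rw [← Finset.sum_sub_distrib]
    have h2 : ∀ x ∈ Finset.Icc 1 K, |(if P x y then psi (f x y) else 0) -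
        (if P x y then psi (g x y) else 0)| ≤ if m / N ≤ x then (1 : ℝ) else 0 := by
      intro x hx
      have hfx := psi_abs (f x y)
      have hgx := psi_abs (g x y)
      rw [abs_le] at hfx hgx
      by_cases hP : P x y
      · simp only [hP, if_true]
        split_ifs with hx2
        · rw [abs_le]; constructor <;> linarith
        · rw [hfg x y hx hy hP]
          · simp
          · push Not at hx2
            have h3 : x + 1 ≤ m / N := hx2
            rw [Nat.le_div_iff_mul_le hN] at h3
            rw [Finset.mem_Icc] at hy
            nlinarith
      · simp only [hP, if_false, sub_zero, abs_zero]
        split_ifs <;> norm_num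
    refine ((Finset.abs_sum_le_sum_abs _ _).trans (Finset.sum_le_sum h2)).trans ?_
    rw [← Finset.sum_filter, Finset.sum_const, nsmul_eq_mul, mul_one]
    have h3 : ((Finset.Icc 1 K).filter (fun x => m / N ≤ x)).card ≤ K + 1 - m / N := by
      rw [← Nat.card_Icc]
      apply Finset.card_le_card
      intro x hx
      simp only [Finset.mem_filter, Finset.mem_Icc] at hx ⊢
      exact ⟨hx.2, hx.1.2⟩
    have h4 : ((K + 1 - m / N : ℕ) : ℝ) ≤ 2 + D := by
      rcases le_total (K + 1) (m / N) with h5 | h5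
      · rw [Nat.sub_eq_zero_of_le h5]; simp; linarith
      · rw [Nat.cast_sub h5]
        have h6 : (m : ℝ) / N < ((m / N : ℕ) : ℝ) + 1 := by
          rw [div_lt_iff₀ hNr]
          exact_mod_cast Nat.lt_mul_of_div_lt (Nat.lt_succ_self _) hN
        push_cast at h6 ⊢
        linarith
    exact le_trans (by exact_mod_cast h3) h4
  refine ((Finset.abs_sum_le_sum_abs _ _).trans (Finset.sum_le_sum h1)).trans ?_
  rw [Finset.sum_const, nsmul_eq_mul, Nat.card_Icc]
  simp only [Nat.add_sub_cancel]
  gcongr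

/-- The numerical wrap-up. -/
theorem const_bound (ε : ℝ) (hε : 0 < ε) : ∃ C : ℝ, 0 < C ∧ ∀ N r m : ℕ, 0 < N → 0 < r →
    m ≠ 0 → m ≤ 2 * N ^ 2 →
    (m.divisors.card : ℝ) * ((N / r : ℕ) * (1 + Real.log (N / r : ℕ))) ≤
      (N : ℝ) / r * (C * (N : ℝ) ^ ε) := by
  obtain ⟨C1, hC1, hdiv⟩ := divisor_bound (ε / 4) (by positivity)
  refine ⟨C1 * 2 ^ (ε / 4) * (1 + 1 / (ε / 2)), by positivity, ?_⟩
  intro N r m hN hr hm hmN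
  have hNr : (1 : ℝ) ≤ N := by exact_mod_cast hN
  have hN0 : (0 : ℝ) < N := by linarith
  have h1 : (m.divisors.card : ℝ) ≤ C1 * 2 ^ (ε / 4) * (N : ℝ) ^ (ε / 2) := by
    refine (hdiv m hm).trans ?_
    have : (m : ℝ) ^ (ε / 4) ≤ (2 * (N : ℝ) ^ 2) ^ (ε / 4) := by
      gcongr
      exact_mod_cast hmN
    rw [Real.mul_rpow (by norm_num) (by positivity), ← Real.rpow_natCast, ← Real.rpow_mul hN0.le]
      at this
    have e : ((2 : ℕ) : ℝ) * (ε / 4) = ε / 2 := by push_cast; ring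
    rw [e] at this
    rw [mul_assoc]
    gcongr
  have h2 : 1 + Real.log (N / r : ℕ) ≤ (1 + 1 / (ε / 2)) * (N : ℝ) ^ (ε / 2) := by
    have h3 : Real.log (N / r : ℕ) ≤ Real.log N := by
      rcases Nat.eq_zero_or_pos (N / r) with h | h
      · rw [h]; simpa using Real.log_nonneg hNr
      · apply Real.log_le_log (by exact_mod_cast h)
        exact_mod_cast Nat.div_le_self _ _
    have h4 := Real.log_le_rpow_div hN0.le (ε := ε / 2) (by positivity)
    have h5 : 1 ≤ (N : ℝ) ^ (ε / 2) := Real.one_le_rpow hNr (by positivity)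
    have e : (1 + 1 / (ε / 2)) * (N : ℝ) ^ (ε / 2) =
      (N : ℝ) ^ (ε / 2) + (N : ℝ) ^ (ε / 2) / (ε / 2) := by ring
    linarith
  have h0 : 0 ≤ 1 + Real.log (N / r : ℕ) := by
    have := Real.log_natCast_nonneg (N / r)
    linarith
  have h6 : ((N / r : ℕ) : ℝ) ≤ N / r := Nat.cast_div_le
  have h7 : (N : ℝ) ^ ε = (N : ℝ) ^ (ε / 2) * (N : ℝ) ^ (ε / 2) := by
    rw [← Real.rpow_add hN0]; congr 1; ring
  calc _ ≤ (C1 * 2 ^ (ε / 4) * (N : ℝ) ^ (ε / 2)) *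
        ((N : ℝ) / r * ((1 + 1 / (ε / 2)) * (N : ℝ) ^ (ε / 2))) := by gcongr
    _ = _ := by rw [h7]; ring

theorem stmt9 :
    ∀ ε : ℝ, 0 < ε → ∃ C : ℝ, 0 < C ∧
      ∀ N h r : ℕ, 0 < N → 1 ≤ h → h ≤ 2 * N ^ 2 → 0 < r → r ∣ h → r ≤ N →
        -- sum over coprime positive x ≤ M, y ≤ M with x + y > M (M = N/r as a rational),
        -- the inner sum over b picks out the unique b₀ ∈ [1,y] with y ∣ (b₀·x − m), m = h/r;
        -- d₀ = (m − b₀·x)/y, V = min{(N − b₀)/y, (d₀ − 1)/x}, U = max{(1 − b₀)/y, (d₀ − N)/x}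
        |∑ x ∈ Finset.Icc 1 N, ∑ y ∈ Finset.Icc 1 N, ∑ b ∈ Finset.Icc (1 : ℤ) (y : ℤ),
            if x * r ≤ N ∧ y * r ≤ N ∧ N < (x + y) * r ∧ Nat.gcd x y = 1 ∧
                (y : ℤ) ∣ (b * (x : ℤ) - ((h / r : ℕ) : ℤ)) then
              psi (min (((N : ℝ) - (b : ℝ)) / (y : ℝ))
                (((((h / r : ℕ) : ℝ) - (b : ℝ) * (x : ℝ)) / (y : ℝ) - 1) / (x : ℝ)))
            else 0| ≤
          C * ((N : ℝ) / (r : ℝ)) * ((N : ℝ) ^ ε + |(h : ℝ) - (N : ℝ) ^ 2| / ((r : ℝ) * (N : ℝ)))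
        ∧
        |∑ x ∈ Finset.Icc 1 N, ∑ y ∈ Finset.Icc 1 N, ∑ b ∈ Finset.Icc (1 : ℤ) (y : ℤ),
            if x * r ≤ N ∧ y * r ≤ N ∧ N < (x + y) * r ∧ Nat.gcd x y = 1 ∧
                (y : ℤ) ∣ (b * (x : ℤ) - ((h / r : ℕ) : ℤ)) then
              psi (max ((1 - (b : ℝ)) / (y : ℝ))
                (((((h / r : ℕ) : ℝ) - (b : ℝ) * (x : ℝ)) / (y : ℝ) - (N : ℝ)) / (x : ℝ)))
            else 0| ≤
          C * ((N : ℝ) / (r : ℝ)) * ((N : ℝ) ^ ε + |(h : ℝ) - (N : ℝ) ^ 2| / ((r : ℝ) * (N : ℝ))) := by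
  intro ε hε
  obtain ⟨C, hC, hbound⟩ := const_bound ε hε
  refine ⟨C + 2, by positivity, ?_⟩
  intro N h r hN hh hhN hr hrh hrN
  obtain ⟨m, hm⟩ := hrh
  have hdiv : h / r = m := by rw [hm]; exact Nat.mul_div_cancel_left _ hr
  rw [hdiv]
  have hm0 : m ≠ 0 := by rintro rfl; omega
  have hmN : m ≤ 2 * N ^ 2 := le_trans (by rw [hm]; exact Nat.le_mul_of_pos_left _ hr) hhN
  obtain ⟨b, hb, hsum⟩ := reduce_sum N r m hr
  have hfin : ∀ S T : ℝ, |S - T| ≤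
        (N : ℝ) / r * (2 + |(h : ℝ) - (N : ℝ) ^ 2| / ((r : ℝ) * (N : ℝ))) →
      |T| ≤ (m.divisors.card : ℝ) * ((N / r : ℕ) * (1 + Real.log (N / r : ℕ))) →
      |S| ≤ (C + 2) * ((N : ℝ) / (r : ℝ)) *
        ((N : ℝ) ^ ε + |(h : ℝ) - (N : ℝ) ^ 2| / ((r : ℝ) * (N : ℝ))) := by
    intro S T h1 h2
    have h3 := h2.trans (hbound N r m hN hr hm0 hmN)
    have h4 : |S| ≤ |S - T| + |T| := by
      have := abs_add_le (S - T) T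
      simpa using this
    have h5 : (1 : ℝ) ≤ (N : ℝ) ^ ε := Real.one_le_rpow (by exact_mod_cast hN) hε.le
    have hD : 0 ≤ |(h : ℝ) - (N : ℝ) ^ 2| / ((r : ℝ) * (N : ℝ)) := by positivity
    generalize |(h : ℝ) - (N : ℝ) ^ 2| / ((r : ℝ) * (N : ℝ)) = D at *
    have hM : 0 ≤ (N : ℝ) / r := by positivity
    calc |S| ≤ (N : ℝ) / r * ((2 + D) + C * (N : ℝ) ^ ε) := by linarith
      _ ≤ (N : ℝ) / r * ((C + 2) * ((N : ℝ) ^ ε + D)) := by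
          apply mul_le_mul_of_nonneg_left _ hM
          nlinarith [mul_nonneg hC.le hD]
      _ = _ := by ring
  constructor
  · rw [hsum (fun x y b => psi (min (((N : ℝ) - (b : ℝ)) / (y : ℝ))
      ((((m : ℝ) - (b : ℝ) * (x : ℝ)) / (y : ℝ) - 1) / (x : ℝ)))), Finset.sum_comm]
    refine hfin _ _ (swap_bound N h r (N / r) m hN hr rfl hm _
      (fun x y => (((N : ℤ) : ℝ) + ((-1 : ℤ) : ℝ) * (b x y : ℝ)) / y)
      (fun x y => N / r < x + y ∧ Nat.gcd x y = 1) ?_)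
      (main_sum (N / r) m hm0 N (-1) (Or.inr rfl) b (fun x y _ hy hg => hb x y hy hg))
    intro x y hx hy _ hle
    rw [Finset.mem_Icc] at hx hy
    have hx0 : (0 : ℝ) < x := by exact_mod_cast hx.1
    have hy0 : (0 : ℝ) < y := by exact_mod_cast hy.1
    have hle' : (N : ℝ) * x + y ≤ m := by exact_mod_cast hle
    rw [min_eq_left]
    · congr 1; push_cast; ring
    · rw [div_le_div_iff₀ hy0 hx0]
      have e : (((m : ℝ) - (b x y : ℝ) * x) / y - 1) * y = m - b x y * x - y := by
        field_simp
      rw [e]; linarith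
  · rw [hsum (fun x y b => psi (max ((1 - (b : ℝ)) / (y : ℝ))
      ((((m : ℝ) - (b : ℝ) * (x : ℝ)) / (y : ℝ) - (N : ℝ)) / (x : ℝ))))]
    -- here `y` is the inner variable and `x` the modulus
    set d : ℕ → ℕ → ℤ := fun y x => ((m : ℤ) - b x y * x) / y with hd
    have hdy : ∀ y x : ℕ, 0 < y → Nat.gcd x y = 1 → d y x * y = m - b x y * x := by
      intro y x hy hg
      apply Int.ediv_mul_cancel
      rw [← dvd_neg, neg_sub]
      exact hb x y hy hg
    have hdiv2 : ∀ y x : ℕ, 0 < y → 0 < x → Nat.gcd y x = 1 → (x : ℤ) ∣ d y x * y - m := by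
      intro y x hy _ hg
      rw [hdy y x hy (by rw [Nat.gcd_comm]; exact hg)]
      exact ⟨-b x y, by ring⟩
    have hmain := main_sum (N / r) m hm0 (-N) 1 (Or.inl rfl) d hdiv2
    have hsw := swap_bound N h r (N / r) m hN hr rfl hm
      (fun y x => max ((1 - (b x y : ℝ)) / (y : ℝ))
        ((((m : ℝ) - (b x y : ℝ) * (x : ℝ)) / (y : ℝ) - (N : ℝ)) / (x : ℝ)))
      (fun y x => (((-N : ℤ) : ℝ) + ((1 : ℤ) : ℝ) * (d y x : ℝ)) / x)
      (fun y x => N / r < y + x ∧ Nat.gcd y x = 1) ?_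
    · refine hfin _ _ (le_trans (le_of_eq ?_) hsw) hmain
      congr 2
      apply Finset.sum_congr rfl
      intro x _
      apply Finset.sum_congr rfl
      intro y _
      simp only [Nat.add_comm x y, Nat.gcd_comm x y]
    intro y x hy hx hP hle
    rw [Finset.mem_Icc] at hx hy
    have hx0 : (0 : ℝ) < x := by exact_mod_cast hx.1
    have hy0 : (0 : ℝ) < y := by exact_mod_cast hy.1
    have hle' : (N : ℝ) * y + x ≤ m := by exact_mod_cast hle
    have hdr : (d y x : ℝ) * y = m - b x y * x := by
      exact_mod_cast hdy y x hy.1 (by rw [Nat.gcd_comm]; exact hP.2)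
    have hdr2 : ((m : ℝ) - (b x y : ℝ) * x) / y = d y x := by
      rw [← hdr]; field_simp
    simp only [hdr2]
    rw [max_eq_right]
    · congr 1; push_cast; ring
    · rw [div_le_div_iff₀ hy0 hx0]
      have e : ((d y x : ℝ) - N) * y = m - b x y * x - N * y := by
        rw [← hdr]; ring
      rw [e]; linarith
end
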